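/- The composite of two contractions between nested graphs is a contraction: if κ₁ : N₁ ⥤ N₂ and κ₂ : N₂ ⥤ N₃ are contractions, then κ₂ ∘ κ₁ is a contraction. -/

import Mathlib

open CategoryTheory

universe v u

/-- A morphism in a category is an identity morphism (up to `eqToHom`). -/
def IsId {C : Type u} [Category.{v} C] {A B : C} (f : A ⟶ B) : Prop :=
  ∃ h : A = B, f = eqToHom h

/-- A flag in a nested graph is a non-identity morphism. -/
def IsFlag {C : Type u} [Category.{v} C] {A B : C} (f : A ⟶ B) : Prop :=
  ¬ IsId f

/-- An irreducible flag is a flag that cannot be written as the composite of two flags. -/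
def IsIrred {C : Type u} [Category.{v} C] {A B : C} (f : A ⟶ B) : Prop :=
  IsFlag f ∧ ¬ ∃ (X : C) (g : A ⟶ X) (h : X ⟶ B), IsFlag g ∧ IsFlag h ∧ g ≫ h = f

/-- A grading: a functor to the finite ordinal `Fin n` (viewed as a preorder category)
sending every non-identity morphism to a non-identity morphism. -/
def IsGrading {C : Type u} [Category.{v} C] {n : ℕ} (G : C ⥤ Fin n) : Prop :=
  ∀ ⦃A B : C⦄ (f : A ⟶ B), IsFlag f → IsFlag (G.map f)

/-- A nested graph: a category admitting a grading into some finite ordinal. -/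
def IsNestedGraph (C : Type u) [Category.{v} C] : Prop :=
  ∃ (n : ℕ) (G : C ⥤ Fin n), IsGrading G

/-- A functor `φ` contracts a flag `f` if `φ.map f` is an identity. -/
def Contracts {C D : Type u} [Category.{v} C] [Category.{v} D]
    (φ : C ⥤ D) {A B : C} (f : A ⟶ B) : Prop :=
  IsId (φ.map f)

/-- An admissible functor: it maps irreducible flags to identities or irreducible flags,
and whenever it contracts an irreducible flag with domain `A`, it contracts every
irreducible flag with domain `A`. -/
def IsAdmissible {C D : Type u} [Category.{v} C] [Category.{v} D] (φ : C ⥤ D) : Prop :=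
  (∀ ⦃A B : C⦄ (f : A ⟶ B), IsIrred f → IsId (φ.map f) ∨ IsIrred (φ.map f)) ∧
  (∀ ⦃A B B' : C⦄ (f : A ⟶ B) (g : A ⟶ B'), IsIrred f → IsIrred g →
      Contracts φ f → Contracts φ g)

/-- The morphisms of the codomain generated by the image of a functor. -/
inductive GenBy {C D : Type u} [Category.{v} C] [Category.{v} D] (φ : C ⥤ D) :
    ∀ {X Y : D}, (X ⟶ Y) → Prop
  | id (X : D) : GenBy φ (𝟙 X)
  | map {A B : C} (f : A ⟶ B) : GenBy φ (φ.map f)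
  | comp {X Y Z : D} (f : X ⟶ Y) (g : Y ⟶ Z) :
      GenBy φ f → GenBy φ g → GenBy φ (f ≫ g)

/-- An epi-functor: its image generates the codomain. -/
def IsEpiFunctor {C D : Type u} [Category.{v} C] [Category.{v} D] (φ : C ⥤ D) : Prop :=
  Function.Surjective φ.obj ∧ ∀ ⦃X Y : D⦄ (f : X ⟶ Y), GenBy φ f

/-- `μ : C ⥤ D` exhibits `D` as the quotient of `C` identifying `r`-related objects,
with morphisms freely generated by the morphisms of `C` subject to the composition
relations of `C` (expressed via the universal property). -/
def IsQuotientBy {C D : Type u} [Category.{v} C] [Category.{v} D]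
    (r : C → C → Prop) (μ : C ⥤ D) : Prop :=
  (∀ A B : C, μ.obj A = μ.obj B ↔ Relation.EqvGen r A B) ∧
  Function.Surjective μ.obj ∧
  (∀ ⦃X Y : D⦄ (f : X ⟶ Y), GenBy μ f) ∧
  (∀ (E : Type u) [Category.{v} E] (F : C ⥤ E),
      (∀ A B : C, r A B → F.obj A = F.obj B) → ∃! F' : D ⥤ E, μ ⋙ F' = F)

/-- A merger: an admissible epi-functor exhibiting its codomain as the quotient of its
domain by an equivalence relation on objects, with morphisms freely generated subject to
the composition relations of the domain. -/
def IsMerger {C D : Type u} [Category.{v} C] [Category.{v} D] (μ : C ⥤ D) : Prop :=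
  IsAdmissible μ ∧ IsEpiFunctor μ ∧
    ∃ r : C → C → Prop, Equivalence r ∧ IsQuotientBy r μ

/-- `A` is a vertex of its fiber under `φ`: it is not the domain of any flag
contracted by `φ`. -/
def IsVertexOver {C D : Type u} [Category.{v} C] [Category.{v} D]
    (φ : C ⥤ D) (A : C) : Prop :=
  ∀ ⦃B : C⦄ (f : A ⟶ B), Contracts φ f → IsId f

/-- `A₁` is a vertex of the fiber of `φ` over `A₂`. -/
def IsFiberVertex {C D : Type u} [Category.{v} C] [Category.{v} D]
    (φ : C ⥤ D) (A₂ : D) (A₁ : C) : Prop :=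
  φ.obj A₁ = A₂ ∧ IsVertexOver φ A₁

/-- A contraction: an admissible epi-functor each of whose fibers is a corolla,
i.e. has a unique vertex. -/
def IsContraction {C D : Type u} [Category.{v} C] [Category.{v} D] (κ : C ⥤ D) : Prop :=
  IsAdmissible κ ∧ IsEpiFunctor κ ∧ ∀ A₂ : D, ∃! A₁ : C, IsFiberVertex κ A₂ A₁

/-- The canonical merger relation of `φ`: it relates distinct objects `A ≠ B` exactly when
`φ A = φ B` and both `A` and `B` are vertices of the fiber of `φ` over `φ A`. -/
def mergerRel {C D : Type u} [Category.{v} C] [Category.{v} D] (φ : C ⥤ D) :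
    C → C → Prop :=
  fun A B => A ≠ B ∧ φ.obj A = φ.obj B ∧ IsVertexOver φ A ∧ IsVertexOver φ B

/-- A canonical merger–contraction decomposition of `φ`: the merger part is the quotient
of the domain identifying, within each fiber of `φ`, all objects that are vertices of that
fiber. -/
def IsCanonicalDecomp {C P D : Type u} [Category.{v} C] [Category.{v} P] [Category.{v} D]
    (φ : C ⥤ D) (μ : C ⥤ P) (κ : P ⥤ D) : Prop :=
  IsQuotientBy (mergerRel φ) μ ∧ μ ⋙ κ = φ

/-- Two merger–contraction pairs are equal as morphisms of nested graphs: one is obtained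
from the other by shifting an isomorphism from the merger to the contraction. -/
def PairEquiv {A B P P' : Type u} [Category.{v} A] [Category.{v} B]
    [Category.{v} P] [Category.{v} P']
    (μ : A ⥤ P) (κ : P ⥤ B) (μ' : A ⥤ P') (κ' : P' ⥤ B) : Prop :=
  ∃ (e : P ⥤ P') (e' : P' ⥤ P), e ⋙ e' = 𝟭 P ∧ e' ⋙ e = 𝟭 P' ∧
    μ ⋙ e = μ' ∧ e ⋙ κ' = κ

/-- A category contains no cycle of flags. -/
def NoFlagCycles (C : Type u) [Category.{v} C] : Prop :=
  ∀ (k : ℕ), 0 < k → ∀ (obj : Fin (k + 1) → C)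
    (flag : ∀ i : Fin k, obj i.castSucc ⟶ obj i.succ),
    (∀ i, IsFlag (flag i)) → obj 0 ≠ obj (Fin.last k)

/-!
A contraction `κ` between nested graphs lifts morphisms from fiber vertices: if `A` is the vertex
of the fiber over `X`, every `g : X ⟶ Y` is the image of a morphism out of `A`. By epi-ness this
reduces to `g = κ f` with `f` starting somewhere in the fiber over `X`. If that starting point is
not the vertex, it is the domain of a contracted irreducible flag, so by admissibility the first
irreducible factor of `f` is contracted as well and can be cancelled; this stops after finitely
many steps, necessarily at the unique vertex `A`.

Consequently, if `A` is a vertex of its fiber under `κ ⋙ ψ`, a flag contracted by `ψ` out of `κ A`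
would lift to a flag contracted by `κ ⋙ ψ` out of `A`. So the vertices of the fibers of `κ ⋙ ψ`
are exactly the `κ`-fiber vertices lying over `ψ`-fiber vertices, and uniqueness passes to the
composite.
-/

section Flags

variable {C : Type u} [Category.{v} C]

theorem IsId.comp {X Y Z : C} {f : X ⟶ Y} {g : Y ⟶ Z} (hf : IsId f) (hg : IsId g) :
    IsId (f ≫ g) := by
  obtain ⟨rfl, rfl⟩ := hf
  obtain ⟨rfl, rfl⟩ := hg
  exact ⟨rfl, eqToHom_trans _ _⟩

theorem IsId.map {D : Type u} [Category.{v} D] (φ : C ⥤ D) {X Y : C} {f : X ⟶ Y}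
    (hf : IsId f) : IsId (φ.map f) := by
  obtain ⟨rfl, rfl⟩ := hf
  exact ⟨rfl, eqToHom_map φ _⟩

theorem IsId.isSplitMono_of_comp {X Y Z : C} {f : X ⟶ Y} {g : Y ⟶ Z} (h : IsId (f ≫ g)) :
    IsSplitMono f := by
  obtain ⟨rfl, hfg⟩ := h
  exact .mk' ⟨g, hfg⟩

/-- The relation on nodes that there is a flag from `A` to `B`. Well-foundedness of this relation
and of its converse is what a grading provides for induction on nodes. -/
def FlagRel (A B : C) : Prop :=
  ∃ f : A ⟶ B, IsFlag f

theorem IsGrading.obj_lt {n : ℕ} {G : C ⥤ Fin n} (hG : IsGrading G) {A B : C} {f : A ⟶ B}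
    (hf : IsFlag f) : G.obj A < G.obj B :=
  (leOfHom (G.map f)).lt_of_ne fun h => hG f hf ⟨h, Subsingleton.elim _ _⟩

theorem IsNestedGraph.wellFounded_flagRel (hC : IsNestedGraph C) :
    WellFounded (FlagRel (C := C)) := by
  obtain ⟨n, G, hG⟩ := hC
  exact Subrelation.wf (fun ⟨_, hf⟩ => hG.obj_lt hf) (InvImage.wf G.obj wellFounded_lt)

theorem IsNestedGraph.wellFounded_flip_flagRel (hC : IsNestedGraph C) :
    WellFounded (flip (FlagRel (C := C))) := by
  obtain ⟨n, G, hG⟩ := hC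
  exact Subrelation.wf (fun ⟨_, hf⟩ => hG.obj_lt hf) (InvImage.wf G.obj wellFounded_gt)

theorem IsNestedGraph.isId_of_isSplitMono (hC : IsNestedGraph C) {X Y : C} (f : X ⟶ Y)
    [IsSplitMono f] : IsId f := by
  obtain ⟨n, G, hG⟩ := hC
  by_contra hf
  exact (hG.obj_lt hf).not_ge (leOfHom (G.map (retraction f)))

theorem IsFlag.exists_isIrred_comp_eq (wf : WellFounded (FlagRel (C := C))) {A B : C}
    {f : A ⟶ B} (hf : IsFlag f) : ∃ (X : C) (p : A ⟶ X) (q : X ⟶ B), IsIrred p ∧ p ≫ q = f := by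
  induction B using wf.induction with
  | _ B ih =>
    by_cases hirr : IsIrred f
    · exact ⟨B, f, 𝟙 B, hirr, Category.comp_id f⟩
    · obtain ⟨X, g, h, hg, hh, rfl⟩ := not_not.mp fun hn => hirr ⟨hf, hn⟩
      obtain ⟨Y, p, q, hp, rfl⟩ := ih X ⟨h, hh⟩ hg
      exact ⟨Y, p, q ≫ h, hp, (Category.assoc p q h).symm⟩

end Flags

section Composition

variable {N₁ N₂ N₃ : Type u} [Category.{v} N₁] [Category.{v} N₂] [Category.{v} N₃]
  {φ : N₁ ⥤ N₂} {ψ : N₂ ⥤ N₃}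

theorem IsAdmissible.comp (hφ : IsAdmissible φ) (hψ : IsAdmissible ψ) :
    IsAdmissible (φ ⋙ ψ) := by
  constructor
  · intro A B f hf
    rcases hφ.1 f hf with hid | hirr
    · exact Or.inl (hid.map ψ)
    · exact hψ.1 _ hirr
  · intro A B B' f g hf hg hc
    rcases hφ.1 f hf with hfid | hfirr
    · exact IsId.map ψ (hφ.2 f g hf hg hfid)
    · rcases hφ.1 g hg with hgid | hgirr
      · exact hgid.map ψ
      · exact hψ.2 _ _ hfirr hgirr hc

theorem GenBy.map_comp (ψ : N₂ ⥤ N₃) {X Y : N₂} {f : X ⟶ Y} (hf : GenBy φ f) :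
    GenBy (φ ⋙ ψ) (ψ.map f) := by
  induction hf with
  | id X => exact ψ.map_id X ▸ .id _
  | map f => exact .map (φ := φ ⋙ ψ) f
  | comp f g _ _ ihf ihg => exact ψ.map_comp f g ▸ .comp _ _ ihf ihg

theorem IsEpiFunctor.comp (hφ : IsEpiFunctor φ) (hψ : IsEpiFunctor ψ) :
    IsEpiFunctor (φ ⋙ ψ) := by
  refine ⟨hψ.1.comp hφ.1, fun X Y f => ?_⟩
  induction hψ.2 f with
  | id X => exact .id X
  | map f => exact (hφ.2 f).map_comp ψ
  | comp f g _ _ ihf ihg => exact .comp _ _ ihf ihg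

end Composition

section Lifting

variable {N₁ N₂ : Type u} [Category.{v} N₁] [Category.{v} N₂] {φ : N₁ ⥤ N₂}

theorem Contracts.comp {A B C : N₁} {p : A ⟶ B} {q : B ⟶ C} (hp : Contracts φ p)
    (hq : Contracts φ q) : Contracts φ (p ≫ q) := by
  rw [Contracts, φ.map_comp]
  exact IsId.comp hp hq

theorem Contracts.isHomLift_comp {A B C : N₁} {p : B ⟶ C} (hp : Contracts φ p)
    {f : A ⟶ B} {X Y : N₂} {g : X ⟶ Y} (hf : φ.IsHomLift g f) : φ.IsHomLift g (f ≫ p) := by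
  obtain ⟨hBC, hp⟩ := hp
  have : φ.IsHomLift (𝟙 (φ.obj C)) p := IsHomLift.of_fac' φ _ p hBC rfl (by simpa using hp)
  exact IsHomLift.comp_lift_id_right' φ g f (φ.obj C) p

theorem Contracts.isHomLift_of_comp {A B C : N₁} {p : A ⟶ B} (hp : Contracts φ p)
    {f : B ⟶ C} {X Y : N₂} {g : X ⟶ Y} (hpf : φ.IsHomLift g (p ≫ f)) : φ.IsHomLift g f := by
  obtain ⟨hAB, hp⟩ := hp
  refine IsHomLift.of_fac φ g f (hAB ▸ IsHomLift.domain_eq φ g (p ≫ f))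
    (IsHomLift.codomain_eq φ g (p ≫ f)) ?_
  simpa [hp] using IsHomLift.fac φ g (p ≫ f)

theorem exists_contracts_isVertexOver (wf : WellFounded (flip (FlagRel (C := N₁))))
    (φ : N₁ ⥤ N₂) (A : N₁) :
    ∃ (B : N₁) (p : A ⟶ B), Contracts φ p ∧ IsVertexOver φ B := by
  induction A using wf.induction with
  | _ A ih =>
    by_cases hA : IsVertexOver φ A
    · exact ⟨A, 𝟙 A, IsId.map φ ⟨rfl, rfl⟩, hA⟩
    · simp only [IsVertexOver, not_forall] at hA
      obtain ⟨B, f, hfc, hf⟩ := hA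
      obtain ⟨D, p, hp, hD⟩ := ih B ⟨f, hf⟩
      exact ⟨D, f ≫ p, Contracts.comp hfc hp, hD⟩

theorem exists_isIrred_contracts_of_not_isVertexOver (wf : WellFounded (FlagRel (C := N₁)))
    (hsplit : ∀ ⦃X Y : N₂⦄ (f : X ⟶ Y), IsSplitMono f → IsId f) {A : N₁}
    (hA : ¬ IsVertexOver φ A) : ∃ (B : N₁) (p : A ⟶ B), IsIrred p ∧ Contracts φ p := by
  simp only [IsVertexOver, not_forall] at hA
  obtain ⟨D, f, hfc, hf⟩ := hA
  obtain ⟨B, p, q, hp, rfl⟩ := IsFlag.exists_isIrred_comp_eq wf hf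
  have hpq : IsId (φ.map p ≫ φ.map q) := φ.map_comp p q ▸ hfc
  exact ⟨B, p, hp, hsplit _ hpq.isSplitMono_of_comp⟩

theorem IsAdmissible.exists_isFiberVertex_isHomLift (hφ : IsAdmissible φ)
    (wf : WellFounded (FlagRel (C := N₁))) (wf_flip : WellFounded (flip (FlagRel (C := N₁))))
    (hsplit : ∀ ⦃X Y : N₂⦄ (f : X ⟶ Y), IsSplitMono f → IsId f) {X Y : N₂} {g : X ⟶ Y}
    {C D : N₁} (f : C ⟶ D) (hf : φ.IsHomLift g f) :
    ∃ (A B : N₁) (k : A ⟶ B), IsFiberVertex φ X A ∧ φ.IsHomLift g k := by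
  induction C using wf_flip.induction generalizing D with
  | _ C ih =>
    by_cases hC : IsVertexOver φ C
    · exact ⟨C, D, f, ⟨IsHomLift.domain_eq φ g f, hC⟩, hf⟩
    obtain ⟨B, p, hp, hpc⟩ := exists_isIrred_contracts_of_not_isVertexOver wf hsplit hC
    by_cases hfid : IsId f
    · obtain ⟨rfl, rfl⟩ := hfid
      -- `𝟙 C` has no irreducible factor to cancel, but `g` is an identity, so `𝟙 B` lifts it too.
      have hpg : φ.IsHomLift g (p ≫ 𝟙 B) := by simpa using hpc.isHomLift_comp hf
      exact ih B ⟨p, hp.1⟩ (𝟙 B) (hpc.isHomLift_of_comp hpg)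
    · obtain ⟨E, r, s, hr, rfl⟩ := IsFlag.exists_isIrred_comp_eq wf hfid
      have hrc : Contracts φ r := hφ.2 p r hp hr hpc
      exact ih E ⟨r, hr.1⟩ s (hrc.isHomLift_of_comp hf)

theorem IsContraction.exists_isHomLift (hφ : IsContraction φ)
    (wf : WellFounded (FlagRel (C := N₁))) (wf_flip : WellFounded (flip (FlagRel (C := N₁))))
    (hsplit : ∀ ⦃X Y : N₂⦄ (f : X ⟶ Y), IsSplitMono f → IsId f) {X Y : N₂} (g : X ⟶ Y)
    {A : N₁} (hA : IsFiberVertex φ X A) : ∃ (B : N₁) (k : A ⟶ B), φ.IsHomLift g k := by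
  induction hφ.2.1.2 g generalizing A with
  | id X => exact ⟨A, 𝟙 A, IsHomLift.id hA.1⟩
  | map f =>
    obtain ⟨A', B, k, hA', hk⟩ :=
      hφ.1.exists_isFiberVertex_isHomLift wf wf_flip hsplit f (.map f)
    obtain rfl := (hφ.2.2 _).unique hA' hA
    exact ⟨B, k, hk⟩
  | @comp X Y Z f g _ _ ihf ihg =>
    obtain ⟨D, k, hk⟩ := ihf hA
    obtain ⟨D', p, hp, hD'⟩ := exists_contracts_isVertexOver wf_flip φ D
    have hkp : φ.IsHomLift f (k ≫ p) := hp.isHomLift_comp hk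
    obtain ⟨B, l, hl⟩ := ihg ⟨IsHomLift.codomain_eq φ f (k ≫ p), hD'⟩
    exact ⟨B, (k ≫ p) ≫ l, inferInstance⟩

end Lifting

section Vertices

variable {N₁ N₂ N₃ : Type u} [Category.{v} N₁] [Category.{v} N₂] [Category.{v} N₃]
  {φ : N₁ ⥤ N₂} {ψ : N₂ ⥤ N₃} {A : N₁}

theorem IsVertexOver.comp (hφ : IsVertexOver φ A) (hψ : IsVertexOver ψ (φ.obj A)) :
    IsVertexOver (φ ⋙ ψ) A :=
  fun _ f hf => hφ f (hψ (φ.map f) hf)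

theorem IsVertexOver.of_comp (hA : IsVertexOver (φ ⋙ ψ) A) : IsVertexOver φ A :=
  fun _ f hf => hA f (IsId.map ψ hf)

theorem IsVertexOver.obj_of_comp (hφ : IsContraction φ)
    (wf : WellFounded (FlagRel (C := N₁))) (wf_flip : WellFounded (flip (FlagRel (C := N₁))))
    (hsplit : ∀ ⦃X Y : N₂⦄ (f : X ⟶ Y), IsSplitMono f → IsId f)
    (hA : IsVertexOver (φ ⋙ ψ) A) : IsVertexOver ψ (φ.obj A) := by
  intro Y g hg
  obtain ⟨B, k, hk⟩ := hφ.exists_isHomLift wf wf_flip hsplit g ⟨rfl, hA.of_comp⟩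
  obtain rfl : φ.obj B = Y := IsHomLift.codomain_eq φ g k
  obtain rfl : g = φ.map k := IsHomLift.eq_of_isHomLift φ g k
  exact (hA k hg).map φ

end Vertices

theorem contraction_comp_general {N₁ N₂ N₃ : Type u}
    [Category.{v} N₁] [Category.{v} N₂] [Category.{v} N₃]
    (wf : WellFounded (FlagRel (C := N₁))) (wf_flip : WellFounded (flip (FlagRel (C := N₁))))
    (hsplit : ∀ ⦃X Y : N₂⦄ (f : X ⟶ Y), IsSplitMono f → IsId f)
    {κ₁ : N₁ ⥤ N₂} {κ₂ : N₂ ⥤ N₃} (hκ₁ : IsContraction κ₁) (hκ₂ : IsContraction κ₂) :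
    IsContraction (κ₁ ⋙ κ₂) := by
  refine ⟨hκ₁.1.comp hκ₂.1, hκ₁.2.1.comp hκ₂.2.1, fun A₃ => ?_⟩
  obtain ⟨A₂, ⟨rfl, hA₂⟩, unique₂⟩ := hκ₂.2.2 A₃
  obtain ⟨A₁, ⟨rfl, hA₁⟩, unique₁⟩ := hκ₁.2.2 A₂
  refine ⟨A₁, ⟨rfl, hA₁.comp hA₂⟩, fun A ⟨hA, hvertex⟩ => unique₁ A ⟨?_, hvertex.of_comp⟩⟩
  exact unique₂ _ ⟨hA, hvertex.obj_of_comp hκ₁ wf wf_flip hsplit⟩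

/-- the composite of two contractions between nested graphs is a
contraction. -/
theorem contraction_comp {N₁ N₂ N₃ : Type u}
    [Category.{v} N₁] [Category.{v} N₂] [Category.{v} N₃]
    (h₁ : IsNestedGraph N₁) (h₂ : IsNestedGraph N₂) (h₃ : IsNestedGraph N₃)
    (κ₁ : N₁ ⥤ N₂) (κ₂ : N₂ ⥤ N₃)
    (hκ₁ : IsContraction κ₁) (hκ₂ : IsContraction κ₂) :
    IsContraction (κ₁ ⋙ κ₂) := by
  exact contraction_comp_general h₁.wellFounded_flagRel h₁.wellFounded_flip_flagRel
    (fun _ _ f _ => h₂.isId_of_isSplitMono f) hκ₁ hκ₂
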